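/- There exists C > 0 such that for each sign σ ∈ {+1,−1} and all nonnegative square-summable sequences f, g, h : ℤ → [0,∞): Σ_{n₁, n₂ ∈ ℤ} ( |n₁−n₂| / ( ⟨Φ_σ⟩^{1/2} ⟨n₁⟩^{1/2} ⟨n₂⟩^{1/2} ) ) f_{n₁−n₂} g_{n₁} h_{n₂} ≤ C ‖f‖_{ℓ²} ‖g‖_{ℓ²} ‖h‖_{ℓ²}. -/

import Mathlib

open scoped ENNReal NNReal

/-- `⟨x⟩ = (1+x²)^{1/2}`. -/
noncomputable def jbR (x : ℝ) : ℝ := Real.sqrt (1 + x ^ 2)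

/-- The Zakharov phase `Φ_σ = n₁² - n₂² + σ⟨n₀⟩` with `n₀ = n₁ - n₂`. -/
noncomputable def PhiZak (σ : ℝ) (n₁ n₂ : ℤ) : ℝ :=
  ((n₁ ^ 2 - n₂ ^ 2 : ℤ) : ℝ) + σ * jbR ((n₁ - n₂ : ℤ) : ℝ)

/-- The `ℓ²(ℤ)` norm (valued in `[0,∞]`). -/
noncomputable def l2Z (ω : ℤ → ℝ≥0) : ℝ≥0∞ :=
  (∑' n : ℤ, ((ω n : ℝ≥0∞)) ^ 2) ^ (1/2 : ℝ)

lemma zak_cs {ι : Type*} (A B : ι → ℝ≥0∞) :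
    ∑' p, A p * B p ≤ (∑' p, A p ^ 2) ^ (1/2 : ℝ) * (∑' p, B p ^ 2) ^ (1/2 : ℝ) := by
  rw [ENNReal.tsum_eq_iSup_sum]
  refine iSup_le fun s => ?_
  have h := ENNReal.inner_le_Lp_mul_Lq s A B (p := 2) (q := 2) Real.HolderConjugate.two_two
  simp only [ENNReal.rpow_two] at h
  refine h.trans ?_
  gcongr
  · exact ENNReal.sum_le_tsum s
  · exact ENNReal.sum_le_tsum s

lemma zak_prod (e : ℤ × ℤ ≃ ℤ × ℤ) (u v : ℤ → ℝ≥0∞) :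
    ∑' p : ℤ × ℤ, (u (e p).1 * v (e p).2) ^ 2 = (∑' n, u n ^ 2) * (∑' n, v n ^ 2) := by
  rw [e.tsum_eq (fun q : ℤ × ℤ => (u q.1 * v q.2) ^ 2), ENNReal.tsum_prod (f := fun a b => (u a * v b) ^ 2)]
  simp_rw [mul_pow, ENNReal.tsum_mul_left, ENNReal.tsum_mul_right]

lemma zak_term (e₁ e₂ : ℤ × ℤ ≃ ℤ × ℤ) (u v w z : ℤ → ℝ≥0∞) :
    ∑' p : ℤ × ℤ, (u (e₁ p).1 * v (e₁ p).2) * (w (e₂ p).1 * z (e₂ p).2) ≤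
      ((∑' n, u n ^ 2) ^ (1/2 : ℝ) * (∑' n, v n ^ 2) ^ (1/2 : ℝ)) *
      ((∑' n, w n ^ 2) ^ (1/2 : ℝ) * (∑' n, z n ^ 2) ^ (1/2 : ℝ)) := by
  refine (zak_cs _ _).trans ?_
  rw [zak_prod, zak_prod, ENNReal.mul_rpow_of_nonneg _ _ (by norm_num),
    ENNReal.mul_rpow_of_nonneg _ _ (by norm_num)]

/-- `(x,y) ↦ (x-y, x)`. -/
def zakE1 : ℤ × ℤ ≃ ℤ × ℤ where
  toFun p := (p.1 - p.2, p.1)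
  invFun q := (q.2, q.2 - q.1)
  left_inv p := by ext <;> simp
  right_inv p := by ext <;> simp

/-- `(x,y) ↦ (x-y, y)`. -/
def zakE2 : ℤ × ℤ ≃ ℤ × ℤ where
  toFun p := (p.1 - p.2, p.2)
  invFun q := (q.1 + q.2, q.2)
  left_inv p := by ext <;> simp
  right_inv p := by ext <;> simp

/-- `(x,y) ↦ (x+y, x)`. -/
def zakE3 : ℤ × ℤ ≃ ℤ × ℤ where
  toFun p := (p.1 + p.2, p.1)
  invFun q := (q.2, q.1 - q.2)
  left_inv p := by ext <;> simp
  right_inv p := by ext <;> simp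

lemma jbR_sq (x : ℝ) : jbR x ^ 2 = 1 + x ^ 2 := Real.sq_sqrt (by positivity)
lemma jbR_pos (x : ℝ) : 0 < jbR x := Real.sqrt_pos.2 (by positivity)
lemma one_le_jbR (x : ℝ) : 1 ≤ jbR x := Real.one_le_sqrt.2 (by nlinarith [sq_nonneg x])
lemma abs_le_jbR (x : ℝ) : |x| ≤ jbR x := Real.abs_le_sqrt (by linarith)
lemma jbR_le (x : ℝ) : jbR x ≤ 1 + |x| := by
  apply Real.sqrt_le_iff.2
  constructor
  · positivity
  · nlinarith [sq_abs x, abs_nonneg x]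

lemma zak_P (σ : ℝ) (hσ : σ = 1 ∨ σ = -1) (x y : ℤ) (hd : x - y ≠ 0)
    (hm : |x + y| ≠ 1) :
    |(x - y : ℝ)| * jbR ((x + y : ℤ) : ℝ) ≤ 8 * jbR (PhiZak σ x y) := by
  have hd1 : (1:ℝ) ≤ |(x - y : ℝ)| := by exact_mod_cast Int.one_le_abs hd
  have hσ1 : |σ| = 1 := by rcases hσ with h | h <;> simp [h]
  have hPhi : PhiZak σ x y = (x - y : ℝ) * (x + y : ℝ) + σ * jbR (x - y : ℝ) := by
    unfold PhiZak; push_cast; ring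
  have hP := abs_le_jbR (PhiZak σ x y)
  have hD := jbR_sq (x - y : ℝ)
  have hDp := jbR_pos (x - y : ℝ)
  have hDl := abs_le_jbR (x - y : ℝ)
  have hab : |σ * jbR (x - y : ℝ)| = jbR (x - y : ℝ) := by
    rw [abs_mul, hσ1, one_mul, abs_of_pos hDp]
  by_cases h0 : x + y = 0
  · have h0' : (x + y : ℝ) = 0 := by exact_mod_cast h0
    rw [hPhi, h0', mul_zero, zero_add, hab] at hP
    have : jbR ((x + y : ℤ) : ℝ) = 1 := by rw [h0]; simp [jbR]
    rw [this, hPhi, h0', mul_zero, zero_add]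
    linarith [abs_nonneg (x - y : ℝ)]
  · have hm2 : 2 ≤ |x + y| := by
      have := Int.one_le_abs h0
      omega
    have hm2' : (2:ℝ) ≤ |(x + y : ℝ)| := by exact_mod_cast hm2
    have hc := jbR_le ((x + y : ℤ) : ℝ)
    push_cast at hc ⊢
    have h15 : jbR (x - y : ℝ) ≤ 3/2 * |(x - y : ℝ)| := by
      apply Real.sqrt_le_iff.2
      constructor
      · positivity
      · nlinarith [sq_abs (x - y : ℝ)]
    have htri : |(x - y : ℝ) * (x + y : ℝ)| - |σ * jbR (x - y : ℝ)| ≤ |PhiZak σ x y| := by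
      rw [hPhi]
      have := abs_sub_abs_le_abs_sub ((x - y : ℝ) * (x + y : ℝ)) (-(σ * jbR (x - y : ℝ)))
      rwa [abs_neg, sub_neg_eq_add] at this
    rw [hab, abs_mul] at htri
    nlinarith [mul_le_mul_of_nonneg_left hm2' (by linarith : 0 ≤ |(x - y : ℝ)|),
      mul_le_mul_of_nonneg_left hc (by linarith : 0 ≤ |(x - y : ℝ)|)]

lemma zak_pt (σ : ℝ) (hσ : σ = 1 ∨ σ = -1) (x y : ℤ) :
    (|(x:ℝ) - y|) / (jbR (PhiZak σ x y) ^ (1/2 : ℝ) * jbR (x : ℝ) ^ (1/2 : ℝ) *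
      jbR (y : ℝ) ^ (1/2 : ℝ)) ≤
    4 * (1 / jbR (x : ℝ) + 1 / jbR (y : ℝ) + 1 / jbR ((x + y : ℤ) : ℝ)) := by
  have ha := jbR_pos (x : ℝ)
  have hb := jbR_pos (y : ℝ)
  have hc := jbR_pos ((x + y : ℤ) : ℝ)
  have hp := jbR_pos (PhiZak σ x y)
  have ha1 := one_le_jbR (x : ℝ)
  have hb1 := one_le_jbR (y : ℝ)
  have hp1 := one_le_jbR (PhiZak σ x y)
  by_cases hd : x - y = 0
  · have : (x - y : ℝ) = 0 := by exact_mod_cast hd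
    rw [this, abs_zero, zero_div]
    positivity
  have key : |(x - y : ℝ)| ^ 2 / (jbR (PhiZak σ x y) * jbR (x : ℝ) * jbR (y : ℝ)) ≤
      16 * (1 / jbR (x : ℝ) + 1 / jbR (y : ℝ) + 1 / jbR ((x + y : ℤ) : ℝ)) ^ 2 := by
    by_cases hm : |x + y| = 1
    · have hm' : |(x + y : ℝ)| = 1 := by exact_mod_cast hm
      have hm2 : (x + y : ℝ) ^ 2 = 1 := by rw [← sq_abs, hm']; norm_num
      have hc2 : (1 / jbR ((x + y : ℤ) : ℝ)) ^ 2 = 1 / 2 := by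
        rw [div_pow, jbR_sq]; push_cast; rw [hm2]; norm_num
      have hab : |(x : ℝ) * y| ≤ jbR x * jbR y := by
        rw [abs_mul]; gcongr <;> apply abs_le_jbR
      have h1 : |(x - y : ℝ)| ^ 2 ≤ 5 * (jbR x * jbR y) := by
        rw [sq_abs]
        have := neg_abs_le ((x:ℝ) * y)
        nlinarith [mul_le_mul ha1 hb1 zero_le_one (by linarith)]
      have h2 : |(x - y : ℝ)| ^ 2 / (jbR (PhiZak σ x y) * jbR (x : ℝ) * jbR (y : ℝ)) ≤ 5 := by
        rw [div_le_iff₀ (by positivity)]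
        have : 0 < jbR (x:ℝ) * jbR y := by positivity
        nlinarith
      have h3 : (1 / jbR ((x + y : ℤ) : ℝ)) ^ 2 ≤
          (1 / jbR (x : ℝ) + 1 / jbR (y : ℝ) + 1 / jbR ((x + y : ℤ) : ℝ)) ^ 2 := by
        gcongr
        have : 0 < 1 / jbR (x : ℝ) + 1 / jbR (y : ℝ) := by positivity
        linarith
      linarith
    · have hP := zak_P σ hσ x y hd hm
      have hdab : |(x - y : ℝ)| ≤ jbR x + jbR y :=
        (abs_sub _ _).trans (add_le_add (abs_le_jbR _) (abs_le_jbR _))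
      set a := jbR (x : ℝ)
      set b := jbR (y : ℝ)
      set c := jbR ((x + y : ℤ) : ℝ)
      set P := jbR (PhiZak σ x y)
      set d := |(x - y : ℝ)|
      have hd0 : 0 ≤ d := abs_nonneg _
      have h1 : d ^ 2 / (P * a * b) ≤ 8 * (a + b) / (a * b * c) := by
        rw [div_le_div_iff₀ (by positivity) (by positivity)]
        have : d * (d * c) ≤ (a + b) * (8 * P) := by gcongr
        nlinarith [mul_le_mul_of_nonneg_left this (by positivity : 0 ≤ a * b)]
      have h2 : 8 * (a + b) / (a * b * c) = 8 * (1 / a * (1 / c) + 1 / b * (1 / c)) := by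
        field_simp; ring
      have : 0 < 1 / a := by positivity
      have : 0 < 1 / b := by positivity
      have : 0 < 1 / c := by positivity
      rw [h2] at h1
      refine h1.trans ?_
      generalize 1 / a = A at *
      generalize 1 / b = B at *
      generalize 1 / c = D at *
      have : 0 < A * D := by positivity
      have : 0 < B * D := by positivity
      nlinarith [sq_nonneg (A + B), sq_nonneg D]
  refine le_of_sq_le_sq ?_ (by positivity)
  rw [mul_pow, div_pow, mul_pow, mul_pow, ← Real.sqrt_eq_rpow, ← Real.sqrt_eq_rpow,
    ← Real.sqrt_eq_rpow, Real.sq_sqrt hp.le, Real.sq_sqrt ha.le, Real.sq_sqrt hb.le]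
  norm_num at key ⊢
  exact key

/-- The sequence `1/⟨n⟩`. -/
noncomputable def zakJ (n : ℤ) : ℝ≥0∞ := ENNReal.ofReal (1 / jbR (n : ℝ))

lemma zakJ_fin : (∑' n, zakJ n ^ 2) ^ (1/2 : ℝ) ≠ ∞ := by
  apply ENNReal.rpow_ne_top_of_nonneg (by norm_num)
  have hs : Summable (fun n : ℤ => (1 / jbR (n : ℝ)) ^ 2) := by
    have h1 : Summable (fun n : ℤ => 1 / (n : ℝ) ^ 2) :=
      Real.summable_one_div_int_pow.2 (by norm_num)
    have h2 : Summable (fun n : ℤ => if n = 0 then (1:ℝ) else 0) :=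
      (hasSum_ite_eq (0:ℤ) (1:ℝ)).summable
    refine Summable.of_nonneg_of_le (fun n => by positivity) (fun n => ?_) (h1.add h2)
    rw [div_pow, jbR_sq]
    by_cases hn : n = 0
    · simp [hn]
    · have : (0:ℝ) < (n:ℝ) ^ 2 := by positivity
      simp only [hn, if_false, add_zero, one_pow]
      gcongr
      linarith
  have : ∀ n, zakJ n ^ 2 = ENNReal.ofReal ((1 / jbR (n : ℝ)) ^ 2) := fun n => by
    rw [zakJ, ENNReal.ofReal_pow (by have := jbR_pos (n:ℝ); positivity)]
  simp_rw [this]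
  exact hs.tsum_ofReal_ne_top

/-- The Zakharov trilinear weight estimate with weight
`|n₀| / (⟨Φ_σ⟩^{1/2} ⟨n₁⟩^{1/2} ⟨n₂⟩^{1/2})`, `n₀ = n₁ - n₂`. -/
theorem Zakharov_W2 :
    ∃ C : ℝ, 0 < C ∧
      ∀ σ : ℝ, (σ = 1 ∨ σ = -1) →
        ∀ f g h : ℤ → ℝ≥0,
          Summable (fun n => f n ^ 2) → Summable (fun n => g n ^ 2) →
          Summable (fun n => h n ^ 2) →
          (∑' p : ℤ × ℤ,
              ENNReal.ofReal ((|p.1 - p.2| : ℝ) /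
                  (jbR (PhiZak σ p.1 p.2) ^ (1/2 : ℝ) * jbR (p.1 : ℝ) ^ (1/2 : ℝ) *
                    jbR (p.2 : ℝ) ^ (1/2 : ℝ))) *
                (f (p.1 - p.2) : ℝ≥0∞) * (g p.1 : ℝ≥0∞) * (h p.2 : ℝ≥0∞))
            ≤ ENNReal.ofReal C * (l2Z f * l2Z g * l2Z h) := by
  set K : ℝ≥0∞ := (∑' n, zakJ n ^ 2) ^ (1/2 : ℝ) with hK
  refine ⟨12 * K.toReal + 1, by positivity, ?_⟩
  intro σ hσ f g h _ _ _
  have hC : 12 * K ≤ ENNReal.ofReal (12 * K.toReal + 1) := by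
    rw [ENNReal.ofReal_add (by positivity) (by norm_num), ENNReal.ofReal_mul (by norm_num),
      ENNReal.ofReal_toReal zakJ_fin]
    have : ENNReal.ofReal 12 = 12 := by simp
    rw [this]
    exact le_self_add
  have t1 := zak_term zakE1 (Equiv.refl _) (fun n => (f n : ℝ≥0∞)) (fun n => (g n : ℝ≥0∞))
    zakJ (fun n => (h n : ℝ≥0∞))
  have t2 := zak_term zakE2 (Equiv.refl _) (fun n => (f n : ℝ≥0∞)) (fun n => (h n : ℝ≥0∞))
    (fun n => (g n : ℝ≥0∞)) zakJ
  have t3 := zak_term zakE2 zakE3 (fun n => (f n : ℝ≥0∞)) (fun n => (h n : ℝ≥0∞))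
    zakJ (fun n => (g n : ℝ≥0∞))
  simp only [zakE1, zakE2, zakE3, Equiv.coe_fn_mk, Equiv.refl_apply] at t1 t2 t3
  calc _ ≤ ∑' p : ℤ × ℤ, 4 *
        ((((f (p.1 - p.2) : ℝ≥0∞) * g p.1) * (zakJ p.1 * h p.2)
        + ((f (p.1 - p.2) : ℝ≥0∞) * h p.2) * (g p.1 * zakJ p.2))
        + ((f (p.1 - p.2) : ℝ≥0∞) * h p.2) * (zakJ (p.1 + p.2) * g p.1)) := by
        refine ENNReal.tsum_le_tsum fun p => ?_
        have hp := ENNReal.ofReal_le_ofReal (zak_pt σ hσ p.1 p.2)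
        have ha := jbR_pos (p.1 : ℝ)
        have hb := jbR_pos (p.2 : ℝ)
        have hc := jbR_pos ((p.1 + p.2 : ℤ) : ℝ)
        rw [ENNReal.ofReal_mul (by norm_num), ENNReal.ofReal_add (by positivity) (by positivity),
          ENNReal.ofReal_add (by positivity) (by positivity)] at hp
        have h4 : ENNReal.ofReal 4 = 4 := by simp
        rw [h4] at hp
        calc _ ≤ (4 * (zakJ p.1 + zakJ p.2 + zakJ (p.1 + p.2))) *
              (f (p.1 - p.2) : ℝ≥0∞) * (g p.1 : ℝ≥0∞) * (h p.2 : ℝ≥0∞) := by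
              gcongr
              exact hp
          _ = _ := by ring
    _ ≤ 4 * ((l2Z f * l2Z g * (K * l2Z h) + l2Z f * l2Z h * (l2Z g * K))
          + l2Z f * l2Z h * (K * l2Z g)) := by
        rw [ENNReal.tsum_mul_left, ENNReal.tsum_add, ENNReal.tsum_add]
        gcongr
        · exact t1
        · exact t2
        · exact t3
    _ = (12 * K) * (l2Z f * l2Z g * l2Z h) := by ring
    _ ≤ _ := by gcongr
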